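/- For every integer n ≥ 0, every (a b; c d) ∈ SL₂(ℤ), and every τ ∈ ℍ, the completion Û_{2n}(τ) := 2i ∑_{0≤j≤n} (−1)^{n+j} π^{2n−j+1} U_{2n−2j}(q) / ((2v)^j j! (2n−2j+1)!) satisfies Û_{2n}((aτ+b)/(cτ+d)) = (cτ+d)^{2n} Û_{2n}(τ); moreover Û_{2n} is a polynomial in 1/v of degree exactly n with holomorphic coefficients, so it is an almost holomorphic modular form of weight 2n and depth n. -/

import Mathlib

/-!
The completion `Û_{2n}` is, up to normalisation, a Taylor coefficient of a non-holomorphic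
Jacobi form. Let
`ϑ(z; τ) = ∑_{m ∈ ℤ} (−1)^m q^{m(m+1)/2} e^{(2m+1)πiz} = 2i ∑_{j≥0} (−1)^j q^{j(j+1)/2} sin((2j+1)πz)`
(`oddTheta`), the odd Jacobi theta function without its factor `q^{1/8}`. The coefficient of
`z^{2k+1}` in its Taylor expansion is `2i (−1)^k π^{2k+1} / (2k+1)!` times the numerator of
`U_{2k}(q)` (`summable_and_hasSum_thetaCoeff`). By Poisson summation,
`ϑ(z; τ) = κ(τ) e^{−πiz²/τ} ϑ(z/τ; −1/τ)` with `κ(τ)` independent of `z` (`oddTheta_S`), and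
multiplication by `e^{πz²/(2v)}` removes the factor `e^{−πiz²/τ}` (`completedSeries_S`). The
coefficient of `z^{2n+1}` in `e^{πz²/(2v)} ϑ(z; τ)`, divided by the denominator
`D(q) = ∑_{j≥0} (−1)^j (2j+1) q^{j(j+1)/2}`, is exactly `Û_{2n}(τ)` (`Uhat_eq`). In this quotient
`κ` cancels, which gives the weight `2n` law under `τ ↦ −1/τ`; invariance under `τ ↦ τ + 1` is
clear, and these two maps generate `SL₂(ℤ)`.

The coefficients of `Û_{2n}` as a polynomial in `1/v` are constant multiples of the `U_{2k}(q)`, and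
the top one is a nonzero multiple of `U_0 = 1`. They are holomorphic because `D(q)` has no zeros on
the upper half-plane (`qnum_zero_ne_zero`): the law for `ϑ` shows that `q D(q)^8` is a cusp form of
weight `12` and level one, hence a multiple of the discriminant `Δ`, a nonzero one since `D → 1` at
`i∞`.
-/

open Complex Filter
open scoped Real

noncomputable section

/-- `q = e^{2πiτ}`. -/
def qq (τ : ℂ) : ℂ := Complex.exp (2 * (π : ℂ) * Complex.I * τ)

/-- Ramanujan's series `U_{2n}(q)`:
numerator `∑_{j≥0} (−1)^j (2j+1)^{2n+1} q^{j(j+1)/2}` divided by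
denominator `∑_{j≥0} (−1)^j (2j+1) q^{j(j+1)/2}`. -/
def Uram (n : ℕ) (q : ℂ) : ℂ :=
  (∑' j : ℕ, (-1 : ℂ) ^ j * ((2 * j + 1 : ℕ) : ℂ) ^ (2 * n + 1) * q ^ (j * (j + 1) / 2)) /
    (∑' j : ℕ, (-1 : ℂ) ^ j * ((2 * j + 1 : ℕ) : ℂ) * q ^ (j * (j + 1) / 2))

/-- The completion
`Û_{2n}(τ) = 2i ∑_{0≤j≤n} (−1)^{n+j} π^{2n−j+1} U_{2n−2j}(q) / ((2v)^j j! (2n−2j+1)!)`. -/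
def Uhat (n : ℕ) (τ : ℂ) : ℂ :=
  2 * Complex.I * ∑ j ∈ Finset.range (n + 1),
    (-1 : ℂ) ^ (n + j) * (π : ℂ) ^ (2 * n - j + 1) * Uram (n - j) (qq τ) /
      ((2 * (τ.im : ℂ)) ^ j * (Nat.factorial j : ℂ) * (Nat.factorial (2 * n - 2 * j + 1) : ℂ))

open Topology

/-! ### The `q`-series -/

/-- The numerator `∑_{j≥0} (−1)^j (2j+1)^{2k+1} q^{j(j+1)/2}` of `U_{2k}(q)`; for `k = 0` it is the
common denominator of all `U_{2k}(q)`. -/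
def qnum (k : ℕ) (q : ℂ) : ℂ :=
  ∑' j : ℕ, (-1 : ℂ) ^ j * ((2 * j + 1 : ℕ) : ℂ) ^ (2 * k + 1) * q ^ (j * (j + 1) / 2)

lemma Uram_eq (k : ℕ) (q : ℂ) : Uram k q = qnum k q / qnum 0 q := by
  simp [Uram, qnum]

lemma le_triangle (j : ℕ) : j ≤ j * (j + 1) / 2 := by
  rw [Nat.le_div_iff_mul_le two_pos]
  rcases j with _ | j
  · simp
  · nlinarith

lemma summable_odd_pow_mul_geometric (m : ℕ) {r : ℝ} (h0 : 0 ≤ r) (h1 : r < 1) :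
    Summable fun j : ℕ ↦ ((2 * j + 1 : ℕ) : ℝ) ^ m * r ^ j := by
  have h := (summable_pow_mul_geometric_of_norm_lt_one (R := ℝ) m (r := r)
    (by rwa [Real.norm_of_nonneg h0])).mul_left ((3 : ℝ) ^ m)
  refine .of_norm_bounded_eventually_nat h ?_
  filter_upwards [Filter.eventually_ge_atTop 1] with j hj
  have hj' : (1 : ℝ) ≤ j := by exact_mod_cast hj
  rw [Real.norm_of_nonneg (by positivity), ← mul_assoc, ← mul_pow]
  gcongr
  push_cast
  linarith

lemma norm_qnum_term_le (k j : ℕ) {q : ℂ} {r : ℝ} (hq : ‖q‖ ≤ r) (h1 : r ≤ 1) :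
    ‖(-1 : ℂ) ^ j * ((2 * j + 1 : ℕ) : ℂ) ^ (2 * k + 1) * q ^ (j * (j + 1) / 2)‖ ≤
      ((2 * j + 1 : ℕ) : ℝ) ^ (2 * k + 1) * r ^ j := by
  have h0 : 0 ≤ r := (norm_nonneg _).trans hq
  rw [norm_mul, norm_mul, norm_pow, norm_neg, norm_one, one_pow, one_mul, norm_pow, norm_pow,
    Complex.norm_natCast]
  gcongr
  exact (pow_le_pow_left₀ (norm_nonneg _) hq _).trans
    (pow_le_pow_of_le_one h0 h1 (le_triangle j))

lemma differentiableOn_qnum (k : ℕ) : DifferentiableOn ℂ (qnum k) (Metric.ball 0 1) := by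
  intro q hq
  rw [mem_ball_zero_iff] at hq
  obtain ⟨r, hqr, hr1⟩ := exists_between hq
  have hr0 : 0 ≤ r := (norm_nonneg _).trans hqr.le
  have h : DifferentiableOn ℂ (qnum k) (Metric.ball 0 r) :=
    Complex.differentiableOn_tsum_of_summable_norm
      (summable_odd_pow_mul_geometric (2 * k + 1) hr0 hr1)
      (fun j ↦ by fun_prop) Metric.isOpen_ball
      (fun j w hw ↦ norm_qnum_term_le k j (mem_ball_zero_iff.mp hw).le hr1.le)
  exact (h.differentiableAt (Metric.isOpen_ball.mem_nhds
    (mem_ball_zero_iff.mpr hqr))).differentiableWithinAt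

lemma qnum_zero_right (k : ℕ) : qnum k 0 = 1 := by
  rw [qnum, tsum_eq_single 0]
  · simp
  · intro j hj
    have := le_triangle j
    rw [zero_pow (by omega), mul_zero]

lemma norm_qq_lt_one {τ : ℂ} (hτ : 0 < τ.im) : ‖qq τ‖ < 1 := by
  rw [qq, Complex.norm_exp, Real.exp_lt_one_iff]
  have : (2 * (π : ℂ) * I * τ).re = -(2 * π * τ.im) := by simp
  rw [this]
  have := Real.pi_pos
  simp only [neg_neg_iff_pos]
  positivity

lemma differentiableOn_qnum_qq (k : ℕ) :
    DifferentiableOn ℂ (fun τ ↦ qnum k (qq τ)) {τ : ℂ | 0 < τ.im} := by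
  refine (differentiableOn_qnum k).comp ?_ ?_
  · unfold qq
    fun_prop
  · intro τ hτ
    exact mem_ball_zero_iff.mpr (norm_qq_lt_one hτ)

/-! ### The theta function and its Taylor expansion -/

/-- The odd Jacobi theta function without its factor `q^{1/8}`:
`∑_{n ∈ ℤ} (−1)^n q^{n(n+1)/2} e^{(2n+1)πiz}`. -/
def oddTheta (z τ : ℂ) : ℂ := cexp (π * I * z) * jacobiTheta₂ (z + τ / 2 + 1 / 2) τ

lemma qq_pow_triangle (j : ℕ) (τ : ℂ) :
    qq τ ^ (j * (j + 1) / 2) = cexp (π * I * (j ^ 2 + j) * τ) := by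
  rw [qq, ← Complex.exp_nat_mul]
  congr 1
  have h : ((j * (j + 1) / 2 : ℕ) : ℂ) = j * (j + 1) / 2 := by
    rw [Nat.cast_div (Nat.even_mul_succ_self j).two_dvd (by norm_num)]
    push_cast
    ring
  rw [h]
  ring

lemma hasSum_oddTheta (z : ℂ) {τ : ℂ} (hτ : 0 < τ.im) :
    HasSum (fun j : ℕ ↦ (-1 : ℂ) ^ j * qq τ ^ (j * (j + 1) / 2) *
      (2 * I * Complex.sin ((2 * j + 1) * (π * z)))) (oddTheta z τ) := by
  have h := ((hasSum_jacobiTheta₂_term (z + τ / 2 + 1 / 2) hτ).mul_left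
    (cexp (π * I * z))).nat_add_neg_add_one
  refine h.congr_fun fun j ↦ ?_
  have hm : (-1 : ℂ) ^ j = cexp (π * I * j) := by
    rw [mul_comm, Complex.exp_nat_mul, Complex.exp_pi_mul_I]
  have hs : 2 * I * Complex.sin ((2 * j + 1) * (π * z)) =
      cexp ((2 * j + 1) * (π * z) * I) + cexp (π * I) * cexp (-((2 * j + 1) * (π * z)) * I) := by
    rw [Complex.sin, Complex.exp_pi_mul_I]
    linear_combination (cexp (-((2 * j + 1) * (π * z)) * I) -
      cexp ((2 * j + 1) * (π * z) * I)) * I_sq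
  rw [hs, hm, qq_pow_triangle]
  rw [mul_add]
  simp only [jacobiTheta₂_term, ← Complex.exp_add]
  push_cast
  congr 1
  · congr 1
    ring
  · -- the two exponents differ by the integral multiple `2πi(j+1)` of `2πi`
    rw [Complex.exp_eq_exp_iff_exists_int]
    refine ⟨j + 1, ?_⟩
    push_cast
    ring

/-- The coefficient of `z^{2k+1}` in the Taylor expansion of `oddTheta z τ` at `z = 0`. -/
def thetaCoeff (τ : ℂ) (k : ℕ) : ℂ :=
  2 * I * ((-1 : ℂ) ^ k * (π : ℂ) ^ (2 * k + 1) / ((2 * k + 1).factorial : ℂ) * qnum k (qq τ))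

/-- Gaussian decay of `q^{j(j+1)/2}` beats the exponential growth of `sinh ((2j+1)x)`. -/
lemma summable_triangle_mul_exp (x : ℝ) {τ : ℂ} (hτ : 0 < τ.im) :
    Summable fun j : ℕ ↦ ‖qq τ ^ (j * (j + 1) / 2)‖ * Real.exp ((2 * j + 1) * (π * x)) := by
  have h := ((summable_jacobiTheta₂_term_iff (((τ.im / 2 - x : ℝ) : ℂ) * I) τ).mpr hτ).norm
  have h2 := (h.comp_injective Nat.cast_injective).mul_left (Real.exp (π * x))
  refine h2.congr fun j ↦ ?_
  simp only [Function.comp, norm_jacobiTheta₂_term]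
  rw [qq_pow_triangle, Complex.norm_exp, ← Real.exp_add, ← Real.exp_add]
  congr 1
  simp [pow_two]
  ring

lemma summable_theta_double (z : ℂ) {τ : ℂ} (hτ : 0 < τ.im) :
    Summable fun p : ℕ × ℕ ↦ ‖(-1 : ℂ) ^ p.1 * qq τ ^ (p.1 * (p.1 + 1) / 2) *
      (2 * I * ((-1 : ℂ) ^ p.2 * ((2 * p.1 + 1) * (π * z)) ^ (2 * p.2 + 1) /
        ((2 * p.2 + 1).factorial : ℂ)))‖ := by
  have hn (p : ℕ × ℕ) : ‖(-1 : ℂ) ^ p.1 * qq τ ^ (p.1 * (p.1 + 1) / 2) *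
      (2 * I * ((-1 : ℂ) ^ p.2 * ((2 * p.1 + 1) * (π * z)) ^ (2 * p.2 + 1) /
        ((2 * p.2 + 1).factorial : ℂ)))‖ = ‖qq τ ^ (p.1 * (p.1 + 1) / 2)‖ * 2 *
        (((2 * p.1 + 1) * (π * ‖z‖)) ^ (2 * p.2 + 1) / ((2 * p.2 + 1).factorial : ℝ)) := by
    have h1 : ‖(2 * p.1 + 1 : ℂ)‖ = 2 * p.1 + 1 := by
      exact_mod_cast Complex.norm_natCast (2 * p.1 + 1)
    simp [h1, abs_of_pos Real.pi_pos]
    ring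
  rw [summable_congr hn, summable_prod_of_nonneg (fun p ↦ by have := Real.pi_pos; positivity)]
  have hs (j : ℕ) := (Real.hasSum_sinh ((2 * j + 1) * (π * ‖z‖))).mul_left
    (‖qq τ ^ (j * (j + 1) / 2)‖ * 2)
  refine ⟨fun j ↦ (hs j).summable, ?_⟩
  simp only [fun j ↦ (hs j).tsum_eq]
  refine .of_nonneg_of_le (fun j ↦ ?_) (fun j ↦ ?_) ((summable_triangle_mul_exp ‖z‖ hτ).mul_left 2)
  · have : 0 ≤ Real.sinh ((2 * j + 1) * (π * ‖z‖)) := by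
      rw [Real.sinh_nonneg_iff]
      have := Real.pi_pos
      positivity
    positivity
  · have : Real.sinh ((2 * j + 1) * (π * ‖z‖)) ≤ Real.exp ((2 * j + 1) * (π * ‖z‖)) := by
      rw [Real.sinh_eq]
      linarith [Real.exp_pos ((2 * j + 1) * (π * ‖z‖)), Real.exp_pos (-((2 * j + 1) * (π * ‖z‖)))]
    nlinarith [norm_nonneg (qq τ ^ (j * (j + 1) / 2))]

/-- The Taylor series of the odd theta function, obtained by expanding each sine in its series
and exchanging the two sums. -/
lemma summable_and_hasSum_thetaCoeff (z : ℂ) {τ : ℂ} (hτ : 0 < τ.im) :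
    (Summable fun k : ℕ ↦ ‖thetaCoeff τ k * z ^ (2 * k + 1)‖) ∧
    HasSum (fun k : ℕ ↦ thetaCoeff τ k * z ^ (2 * k + 1)) (oddTheta z τ) := by
  have hd := summable_theta_double z hτ
  have hrow (j : ℕ) := ((Complex.hasSum_sin ((2 * j + 1) * (π * z))).mul_left (2 * I)).mul_left
    ((-1 : ℂ) ^ j * qq τ ^ (j * (j + 1) / 2))
  have hcol (k : ℕ) : ∑' j : ℕ, (-1 : ℂ) ^ j * qq τ ^ (j * (j + 1) / 2) *
      (2 * I * ((-1 : ℂ) ^ k * ((2 * j + 1) * (π * z)) ^ (2 * k + 1) /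
        ((2 * k + 1).factorial : ℂ))) = thetaCoeff τ k * z ^ (2 * k + 1) := by
    rw [thetaCoeff, qnum, ← tsum_mul_left, ← tsum_mul_left, ← tsum_mul_right]
    refine tsum_congr fun j ↦ ?_
    push_cast
    rw [mul_pow, mul_pow]
    ring
  have htot : HasSum (fun p : ℕ × ℕ ↦ (-1 : ℂ) ^ p.1 * qq τ ^ (p.1 * (p.1 + 1) / 2) *
      (2 * I * ((-1 : ℂ) ^ p.2 * ((2 * p.1 + 1) * (π * z)) ^ (2 * p.2 + 1) /
        ((2 * p.2 + 1).factorial : ℂ)))) (oddTheta z τ) := by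
    have h1 := hd.of_norm.hasSum
    have h2 := h1.prod_fiberwise hrow
    rwa [h2.unique (hasSum_oddTheta z hτ)] at h1
  have hswap := (Equiv.prodComm ℕ ℕ).hasSum_iff.mpr htot
  have hdswap := (Equiv.prodComm ℕ ℕ).summable_iff.mpr hd
  constructor
  · refine .of_nonneg_of_le (fun _ ↦ norm_nonneg _) (fun k ↦ ?_) hdswap.prod
    rw [← hcol k]
    exact norm_tsum_le_tsum_norm (hdswap.prod_factor k)
  · refine (hswap.prod_fiberwise fun k ↦ (hswap.summable.prod_factor k).hasSum).congr_fun
      fun k ↦ ?_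
    exact (hcol k).symm

/-- Apart from a factor independent of `z`, `oddTheta` transforms under `(z, τ) ↦ (z/τ, -1/τ)`
like a Jacobi form of index `1/2`. -/
lemma oddTheta_S (z : ℂ) {τ : ℂ} (hτ : 0 < τ.im) :
    oddTheta z τ = 1 / (-I * τ) ^ (1 / 2 : ℂ) * cexp (π * I * (1 / 2 - τ / 4 - 1 / (4 * τ))) *
      cexp (-π * I / τ * z ^ 2) * oddTheta (z / τ) (-1 / τ) := by
  have hτ0 : τ ≠ 0 := by rintro rfl; simp at hτ
  have h1 := jacobiTheta₂_functional_equation (z + τ / 2 + 1 / 2) τ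
  have h2 := jacobiTheta₂_add_left' ((z + τ / 2 + 1 / 2) / τ) (-1 / τ)
  have e : (z + τ / 2 + 1 / 2) / τ + -1 / τ = z / τ + -1 / τ / 2 + 1 / 2 := by
    field_simp
    ring
  rw [e] at h2
  rw [oddTheta, h1, oddTheta, h2]
  have e2 : cexp (π * I * z) * cexp (-π * I * (z + τ / 2 + 1 / 2) ^ 2 / τ) =
      cexp (π * I * (1 / 2 - τ / 4 - 1 / (4 * τ))) * cexp (-π * I / τ * z ^ 2) *
      (cexp (π * I * (z / τ)) * cexp (-π * I * (-1 / τ + 2 * ((z + τ / 2 + 1 / 2) / τ)))) := by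
    rw [← Complex.exp_add, ← Complex.exp_add, ← Complex.exp_add, ← Complex.exp_add,
      Complex.exp_eq_exp_iff_exists_int]
    refine ⟨0, ?_⟩
    field_simp
    ring
  linear_combination (1 / (-I * τ) ^ (1 / 2 : ℂ)) *
    jacobiTheta₂ ((z + τ / 2 + 1 / 2) / τ) (-1 / τ) * e2

/-! ### Entire functions and formal power series -/

/-- `f` is the entire function with Taylor series `P` at the origin, with a series that converges
absolutely everywhere. -/
def Represents (f : ℂ → ℂ) (P : PowerSeries ℂ) : Prop :=
  ∀ w, (Summable fun n ↦ ‖P.coeff n * w ^ n‖) ∧ HasSum (fun n ↦ P.coeff n * w ^ n) (f w)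

lemma Represents.mul {f g : ℂ → ℂ} {P Q : PowerSeries ℂ} (hf : Represents f P)
    (hg : Represents g Q) : Represents (fun w ↦ f w * g w) (P * Q) := by
  intro w
  have hc (n : ℕ) : (P * Q).coeff n * w ^ n = ∑ kl ∈ Finset.HasAntidiagonal.antidiagonal n,
      (P.coeff kl.1 * w ^ kl.1) * (Q.coeff kl.2 * w ^ kl.2) := by
    rw [PowerSeries.coeff_mul, Finset.sum_mul]
    refine Finset.sum_congr rfl fun kl hkl ↦ ?_
    rw [← Finset.HasAntidiagonal.mem_antidiagonal.mp hkl]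
    ring
  have hs := summable_norm_sum_mul_antidiagonal_of_summable_norm (hf w).1 (hg w).1
  simp only [hc]
  refine ⟨hs, ?_⟩
  rw [← (hf w).2.tsum_eq, ← (hg w).2.tsum_eq,
    tsum_mul_tsum_eq_tsum_sum_antidiagonal_of_summable_norm (hf w).1 (hg w).1]
  exact hs.of_norm.hasSum

lemma Represents.rescale {f : ℂ → ℂ} {P : PowerSeries ℂ} (hf : Represents f P) (a : ℂ) :
    Represents (fun w ↦ f (a * w)) (PowerSeries.rescale a P) := by
  intro w
  simpa [PowerSeries.coeff_rescale, mul_pow, mul_assoc, mul_left_comm] using hf (a * w)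

lemma Represents.const_mul {f : ℂ → ℂ} {P : PowerSeries ℂ} (hf : Represents f P) (a : ℂ) :
    Represents (fun w ↦ a * f w) (PowerSeries.C a * P) := by
  intro w
  have hc (n : ℕ) : (PowerSeries.C a * P).coeff n * w ^ n = a * (P.coeff n * w ^ n) := by
    rw [PowerSeries.coeff_C_mul, mul_assoc]
  simp only [hc]
  exact ⟨by simpa using (hf w).1.mul_left ‖a‖, (hf w).2.mul_left a⟩

lemma represents_exp : Represents cexp (PowerSeries.exp ℂ) := by
  intro w
  have hc (n : ℕ) : (PowerSeries.exp ℂ).coeff n * w ^ n = w ^ n / n.factorial := by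
    rw [PowerSeries.coeff_exp]
    simp [div_eq_mul_inv, mul_comm]
  simp only [hc]
  refine ⟨NormedSpace.norm_expSeries_div_summable w, ?_⟩
  rw [Complex.exp_eq_exp_ℂ]
  exact NormedSpace.expSeries_div_hasSum_exp w

lemma Represents.hasFPowerSeriesAt {f : ℂ → ℂ} {P : PowerSeries ℂ} (hf : Represents f P) :
    HasFPowerSeriesAt f (FormalMultilinearSeries.ofScalars ℂ fun n ↦ P.coeff n) 0 := by
  rw [hasFPowerSeriesAt_iff]
  refine .of_forall fun z ↦ ?_
  simpa [mul_comm] using (hf z).2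

/-- The point `w = 0` is excluded from the hypothesis because the functions of `w = z²` to be
compared are known only after division by `z`. -/
lemma Represents.unique {f g : ℂ → ℂ} {P Q : PowerSeries ℂ} (hf : Represents f P)
    (hg : Represents g Q) (h : ∀ w, w ≠ 0 → f w = g w) : P = Q := by
  have hev : f =ᶠ[𝓝 0] g := by
    refine (AnalyticAt.frequently_eq_iff_eventually_eq hf.hasFPowerSeriesAt.analyticAt
      hg.hasFPowerSeriesAt.analyticAt).mp ?_
    have h' : ∀ᶠ w in 𝓝[≠] (0 : ℂ), f w = g w := eventually_nhdsWithin_of_forall h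
    exact h'.frequently
  have := hf.hasFPowerSeriesAt.eq_formalMultilinearSeries_of_eventually hg.hasFPowerSeriesAt hev
  ext n
  simpa using congrArg (fun p ↦ p.coeff n) this

/-! ### The completed Taylor series -/

/-- The Taylor series of `oddTheta z τ / z` at `z = 0`, in the variable `X = z²`. -/
def thetaSeries (τ : ℂ) : PowerSeries ℂ := PowerSeries.mk (thetaCoeff τ)

/-- The Taylor series of `exp (πz²/(2v)) * oddTheta z τ / z` at `z = 0`, in the variable
`X = z²`, where `v` is the imaginary part of `τ`. -/
def completedSeries (τ : ℂ) : PowerSeries ℂ :=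
  PowerSeries.rescale ((π : ℂ) / (2 * τ.im)) (PowerSeries.exp ℂ) * thetaSeries τ

/-- Since `oddTheta` is odd in `z`, it is `z` times an entire function of `z²`. -/
lemma exists_represents_thetaSeries {τ : ℂ} (hτ : 0 < τ.im) :
    ∃ f, Represents f (thetaSeries τ) ∧ ∀ z, z * f (z ^ 2) = oddTheta z τ := by
  have hs (z : ℂ) := summable_and_hasSum_thetaCoeff z hτ
  have hz (z : ℂ) (k : ℕ) :
      thetaCoeff τ k * z ^ (2 * k + 1) = z * ((thetaSeries τ).coeff k * (z ^ 2) ^ k) := by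
    rw [thetaSeries, PowerSeries.coeff_mk]
    ring
  have hsum (w : ℂ) : Summable fun n ↦ ‖(thetaSeries τ).coeff n * w ^ n‖ := by
    rcases eq_or_ne w 0 with rfl | hw
    · refine summable_of_ne_finset_zero (s := {0}) fun n hn ↦ ?_
      simp only [Finset.mem_singleton] at hn
      simp [hn]
    · obtain ⟨z, rfl⟩ := IsAlgClosed.exists_pow_nat_eq w two_pos
      have hz0 : z ≠ 0 := by rintro rfl; simp at hw
      have := (hs z).1
      simp only [hz, norm_mul z] at this
      exact (summable_mul_left_iff (norm_ne_zero_iff.mpr hz0)).mp this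
  refine ⟨fun w ↦ ∑' n, (thetaSeries τ).coeff n * w ^ n,
    fun w ↦ ⟨hsum w, (hsum w).of_norm.hasSum⟩, fun z ↦ ?_⟩
  rw [← (hs z).2.tsum_eq, ← tsum_mul_left]
  exact tsum_congr fun k ↦ (hz z k).symm

/-- The constant (in `z`) factor in the transformation law of `oddTheta z τ / z` under
`τ ↦ -1/τ`. -/
def thetaFactor (τ : ℂ) : ℂ :=
  1 / (-I * τ) ^ (1 / 2 : ℂ) * cexp (π * I * (1 / 2 - τ / 4 - 1 / (4 * τ))) / τ

lemma im_neg_one_div {τ : ℂ} : (-1 / τ).im = τ.im / normSq τ := by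
  rw [neg_div, neg_im, one_div, inv_im, neg_div, neg_neg]

lemma im_neg_one_div_pos {τ : ℂ} (hτ : 0 < τ.im) : 0 < (-1 / τ).im := by
  rw [im_neg_one_div]
  have hτ0 : τ ≠ 0 := by rintro rfl; simp at hτ
  have := normSq_pos.mpr hτ0
  positivity

lemma thetaSeries_S {τ : ℂ} (hτ : 0 < τ.im) :
    thetaSeries τ = PowerSeries.C (thetaFactor τ) *
      (PowerSeries.rescale (-π * I / τ) (PowerSeries.exp ℂ) *
        PowerSeries.rescale ((τ ^ 2)⁻¹) (thetaSeries (-1 / τ))) := by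
  have hτ0 : τ ≠ 0 := by rintro rfl; simp at hτ
  obtain ⟨f, hf, hfz⟩ := exists_represents_thetaSeries hτ
  obtain ⟨g, hg, hgz⟩ := exists_represents_thetaSeries (im_neg_one_div_pos hτ)
  refine hf.unique (((represents_exp.rescale _).mul (hg.rescale _)).const_mul _) fun w hw ↦ ?_
  obtain ⟨z, rfl⟩ := IsAlgClosed.exists_pow_nat_eq w two_pos
  have hz0 : z ≠ 0 := by rintro rfl; simp at hw
  apply mul_left_cancel₀ hz0
  have e : (τ ^ 2)⁻¹ * z ^ 2 = (z / τ) ^ 2 := by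
    field_simp
  rw [hfz, oddTheta_S z hτ, ← hgz, e, thetaFactor]
  ring

/-- The Gaussian factor `exp (πz²/(2v))` absorbs the factor `exp (-πiz²/τ)` in the transformation
law of the theta function, so only a constant and the substitution `z ↦ z/τ` remain. -/
lemma completedSeries_S {τ : ℂ} (hτ : 0 < τ.im) :
    completedSeries τ = PowerSeries.C (thetaFactor τ) *
      PowerSeries.rescale ((τ ^ 2)⁻¹) (completedSeries (-1 / τ)) := by
  have hτ0 : τ ≠ 0 := by rintro rfl; simp at hτ
  have hv : (τ.im : ℂ) ≠ 0 := by exact_mod_cast hτ.ne'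
  have hc : (starRingEnd ℂ) τ ≠ 0 := by simpa using hτ0
  -- since `1 / Im(-1/τ) = |τ|² / v`, this is the identity `τ̄ = τ - 2iv` in disguise
  have e : (π : ℂ) / (2 * τ.im) + -π * I / τ = (π : ℂ) / (2 * (-1 / τ).im) * (τ ^ 2)⁻¹ := by
    rw [im_neg_one_div]
    push_cast
    rw [← mul_conj]
    have hconj : (starRingEnd ℂ) τ = τ - 2 * τ.im * I := by
      apply Complex.ext <;> simp
      ring
    rw [hconj] at hc ⊢
    field_simp
    ring
  rw [completedSeries, completedSeries, map_mul, PowerSeries.rescale_rescale, ← e,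
    ← PowerSeries.exp_mul_exp_eq_exp_add, thetaSeries_S hτ]
  ring

/-! ### Modularity of the completion -/

lemma coeff_zero_completedSeries (τ : ℂ) :
    (completedSeries τ).coeff 0 = 2 * I * π * qnum 0 (qq τ) := by
  simp [completedSeries, thetaSeries, thetaCoeff, PowerSeries.coeff_mul]
  ring_nf

/-- The completion is a normalised Taylor coefficient of `exp (πz²/(2v)) * oddTheta z τ`. -/
lemma Uhat_eq (n : ℕ) (τ : ℂ) :
    Uhat n τ = (completedSeries τ).coeff n / qnum 0 (qq τ) := by
  rw [Uhat, completedSeries, PowerSeries.coeff_mul, Finset.Nat.sum_antidiagonal_eq_sum_range_succ_mk,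
    Finset.mul_sum, Finset.sum_div]
  refine Finset.sum_congr rfl fun j hj ↦ ?_
  have hjn : j ≤ n := by simpa [Nat.lt_succ_iff] using hj
  obtain ⟨m, rfl⟩ := Nat.exists_eq_add_of_le hjn
  have e1 : j + m - j = m := by omega
  have e2 : 2 * (j + m) - j + 1 = j + (2 * m + 1) := by omega
  have e3 : 2 * (j + m) - 2 * j + 1 = 2 * m + 1 := by omega
  have e4 : (-1 : ℂ) ^ (j + m + j) = (-1) ^ m := by
    rw [show j + m + j = 2 * j + m by ring, pow_add, pow_mul]
    simp
  rw [PowerSeries.coeff_rescale, PowerSeries.coeff_exp, thetaSeries, PowerSeries.coeff_mk, e1, e2,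
    e3, e4, Uram_eq, thetaCoeff, div_pow, pow_add (π : ℂ) j]
  simp only [one_div, map_inv₀, map_natCast]
  simp only [div_eq_mul_inv, mul_inv]
  ring

lemma thetaFactor_ne_zero {τ : ℂ} (hτ0 : τ ≠ 0) : thetaFactor τ ≠ 0 := by
  have : (-I * τ) ^ (1 / 2 : ℂ) ≠ 0 := by
    rw [Ne, Complex.cpow_eq_zero_iff]
    simp [hτ0]
  simp [thetaFactor, hτ0, Complex.exp_ne_zero]

lemma qnum_zero_S {τ : ℂ} (hτ : 0 < τ.im) :
    qnum 0 (qq τ) = thetaFactor τ * qnum 0 (qq (-1 / τ)) := by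
  have h := congrArg (PowerSeries.coeff 0) (completedSeries_S hτ)
  rw [PowerSeries.coeff_C_mul, PowerSeries.coeff_rescale, coeff_zero_completedSeries,
    coeff_zero_completedSeries] at h
  have h0 : 2 * I * (π : ℂ) ≠ 0 := by simp [Real.pi_ne_zero]
  apply mul_left_cancel₀ h0
  rw [h]
  ring

lemma Uhat_S (n : ℕ) {τ : ℂ} (hτ : 0 < τ.im) :
    Uhat n (-1 / τ) = τ ^ (2 * n) * Uhat n τ := by
  have hτ0 : τ ≠ 0 := by rintro rfl; simp at hτ
  have hF := thetaFactor_ne_zero hτ0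
  rw [Uhat_eq, Uhat_eq, qnum_zero_S hτ, completedSeries_S hτ, PowerSeries.coeff_C_mul,
    PowerSeries.coeff_rescale, inv_pow, ← pow_mul, mul_div_mul_left _ _ hF, mul_div_assoc,
    mul_inv_cancel_left₀ (pow_ne_zero _ hτ0)]

lemma qq_add_one (τ : ℂ) : qq (τ + 1) = qq τ := by
  rw [qq, qq, mul_add, mul_one, Complex.exp_add, Complex.exp_two_pi_mul_I, mul_one]

lemma Uhat_T (n : ℕ) (τ : ℂ) : Uhat n (τ + 1) = Uhat n τ := by
  simp [Uhat, qq_add_one]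

open UpperHalfPlane ModularForm MatrixGroups in
/-- The transformation laws under `τ ↦ -1/τ` and `τ ↦ τ + 1` imply those under all of `SL₂(ℤ)`. -/
lemma slash_eq_of_S_T {f : ℂ → ℂ} {k : ℕ}
    (hS : ∀ τ : ℂ, 0 < τ.im → f (-1 / τ) = τ ^ k * f τ) (hT : ∀ τ : ℂ, f (τ + 1) = f τ)
    (γ : SL(2, ℤ)) : (fun τ : ℍ ↦ f τ) ∣[(k : ℤ)] γ = fun τ : ℍ ↦ f τ := by
  refine SlashInvariantForm.slash_action_generators_SL2Z ?_ ?_ γ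
  · ext z
    have h := hS z z.2
    rw [SL_slash_apply, UpperHalfPlane.modular_S_smul, ModularGroup.denom_S]
    have e : f (UpperHalfPlane.mk (-(z : ℂ))⁻¹ z.im_inv_neg_coe_pos : ℍ) = f (-1 / z) := by
      congr 1
      simp [neg_div, inv_neg]
    rw [e, h, zpow_neg, zpow_natCast]
    field_simp [z.ne_zero]
  · ext z
    rw [SL_slash_apply, ModularGroup.denom_apply, modular_T_smul]
    simp [ModularGroup.T, add_comm (1 : ℂ), hT]

open UpperHalfPlane ModularForm MatrixGroups in
lemma Uhat_modular (n : ℕ) {a b c d : ℤ} (h : a * d - b * c = 1) {τ : ℂ} (hτ : 0 < τ.im) :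
    Uhat n ((a * τ + b) / (c * τ + d)) = (c * τ + d) ^ (2 * n) * Uhat n τ := by
  let γ : SL(2, ℤ) := ⟨!![a, b; c, d], by rw [Matrix.det_fin_two_of, h]⟩
  have hγ := congrFun (slash_eq_of_S_T (k := 2 * n) (fun τ hτ ↦ Uhat_S n hτ) (Uhat_T n) γ) ⟨τ, hτ⟩
  rw [SL_slash_apply, zpow_neg, zpow_natCast] at hγ
  have hd : denom γ (⟨τ, hτ⟩ : ℍ) = c * τ + d := by
    rw [ModularGroup.denom_apply]
    simp [γ]
  have hm : ((γ • (⟨τ, hτ⟩ : ℍ) : ℍ) : ℂ) = (a * τ + b) / (c * τ + d) := by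
    rw [UpperHalfPlane.specialLinearGroup_apply]
    simp [γ]
  have hd0 := denom_ne_zero (γ : GL (Fin 2) ℝ) ⟨τ, hτ⟩
  rw [hd] at hγ hd0
  rw [hm] at hγ
  rw [← hγ, mul_comm (_ ^ (2 * n)), inv_mul_cancel_right₀ (pow_ne_zero _ hd0)]

/-! ### Non-vanishing of the denominator -/

/-- The eighth power removes the square root in the multiplier, so that `q * D(q)^8` has
weight `12` for `D(q) = ∑_{j≥0} (−1)^j (2j+1) q^{j(j+1)/2}`. -/
lemma thetaFactor_pow_eight {τ : ℂ} (hτ : 0 < τ.im) :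
    qq τ * thetaFactor τ ^ 8 * τ ^ 12 = qq (-1 / τ) := by
  have hτ0 : τ ≠ 0 := by rintro rfl; simp at hτ
  have h1 : ((-I * τ) ^ (1 / 2 : ℂ)) ^ 8 = τ ^ 4 := by
    rw [← Complex.cpow_nat_mul]
    norm_num
    rw [mul_pow, I_pow_four, one_mul]
  have h2 : qq τ * cexp (π * I * (1 / 2 - τ / 4 - 1 / (4 * τ))) ^ 8 = qq (-1 / τ) := by
    rw [qq, qq, ← Complex.exp_nat_mul, ← Complex.exp_add, Complex.exp_eq_exp_iff_exists_int]
    refine ⟨2, ?_⟩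
    field_simp
    push_cast
    ring
  rw [← h2, thetaFactor, div_pow, mul_pow, div_pow, h1]
  field_simp

open UpperHalfPlane in
lemma tendsto_qq_atImInfty : Tendsto (fun τ : ℍ ↦ qq τ) atImInfty (𝓝 0) := by
  have := UpperHalfPlane.qParam_tendsto_atImInfty zero_lt_one
  simpa [qq, Function.Periodic.qParam] using this

open UpperHalfPlane in
lemma tendsto_qnum_atImInfty : Tendsto (fun τ : ℍ ↦ qnum 0 (qq τ)) atImInfty (𝓝 1) := by
  have h := ((differentiableOn_qnum 0).differentiableAt
    (Metric.ball_mem_nhds 0 one_pos)).continuousAt.tendsto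
  rw [qnum_zero_right] at h
  exact h.comp tendsto_qq_atImInfty

open UpperHalfPlane ModularForm MatrixGroups in
lemma denom_slash (γ : SL(2, ℤ)) : (fun τ : ℍ ↦ qq τ * qnum 0 (qq τ) ^ 8) ∣[(12 : ℤ)] γ =
    fun τ : ℍ ↦ qq τ * qnum 0 (qq τ) ^ 8 := by
  refine slash_eq_of_S_T (f := fun τ ↦ qq τ * qnum 0 (qq τ) ^ 8) (k := 12) (fun τ hτ ↦ ?_)
    (fun τ ↦ by simp only [qq_add_one]) γ
  rw [qnum_zero_S hτ, ← thetaFactor_pow_eight hτ]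
  ring

open UpperHalfPlane ModularForm MatrixGroups in
/-- The product `q * D(q)^8`, where `D(q) = ∑_{j≥0} (−1)^j (2j+1) q^{j(j+1)/2}`, as a cusp form
of weight `12` and level one. -/
def denomCuspForm : CuspForm 𝒮ℒ 12 where
  toFun := fun τ : ℍ ↦ qq τ * qnum 0 (qq τ) ^ 8
  slash_action_eq' A hA := by
    obtain ⟨A, rfl⟩ := hA
    exact denom_slash A
  holo' := by
    rw [UpperHalfPlane.mdifferentiable_iff]
    refine DifferentiableOn.congr (f := fun τ : ℂ ↦ qq τ * qnum 0 (qq τ) ^ 8) ?_ fun z hz ↦ ?_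
    · refine DifferentiableOn.mul ?_ ((differentiableOn_qnum_qq 0).pow 8)
      unfold qq
      fun_prop
    · simp [ofComplex_apply_of_im_pos hz]
  zero_at_cusps' hc := by
    rw [Subgroup.IsArithmetic.isCusp_iff_isCusp_SL2Z] at hc
    rw [OnePoint.isZeroAt_iff_forall_SL2Z hc]
    intro γ _
    rw [denom_slash]
    have h := tendsto_qq_atImInfty.mul (tendsto_qnum_atImInfty.pow 8)
    rw [zero_mul] at h
    exact h

/-- A weight `12` cusp form is a multiple of `Δ`, which has no zeros; and the multiple is not zero
because the denominator tends to `1` at `i∞`. -/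
lemma qnum_zero_ne_zero {τ : ℂ} (hτ : 0 < τ.im) : qnum 0 (qq τ) ≠ 0 := by
  obtain ⟨c, hc⟩ := CuspForm.exists_smul_discriminant_of_weight_eq_twelve denomCuspForm
  have hval (z : UpperHalfPlane) :
      c * ModularForm.discriminant z = qq z * qnum 0 (qq z) ^ 8 :=
    congrArg (fun f : CuspForm _ 12 ↦ f z) hc
  have hc0 : c ≠ 0 := by
    rintro rfl
    obtain ⟨z, hz⟩ := (tendsto_qnum_atImInfty.eventually_ne one_ne_zero).exists
    have := hval z
    rw [zero_mul, eq_comm, mul_eq_zero] at this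
    rcases this with h | h
    · exact Complex.exp_ne_zero _ h
    · exact hz (pow_eq_zero_iff (by norm_num) |>.mp h)
  intro h
  have := hval ⟨τ, hτ⟩
  simp [h, hc0, ModularForm.discriminant_ne_zero] at this

/-- For every `n ≥ 0`, the completion `Û_{2n}` transforms like a modular
form of weight `2n` on SL₂(ℤ), and is a polynomial in `1/v` of degree exactly `n` with
holomorphic coefficients; hence it is an almost holomorphic modular form of weight `2n` and
depth `n`. -/
theorem Uhat_almost_holomorphic_modular (n : ℕ) :
    (∀ a b c d : ℤ, a * d - b * c = 1 → ∀ τ : ℂ, 0 < τ.im →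
      Uhat n ((a * τ + b) / (c * τ + d)) = (c * τ + d) ^ (2 * n) * Uhat n τ) ∧
    (∃ f : ℕ → ℂ → ℂ,
      (∀ j, j ≤ n → DifferentiableOn ℂ (f j) {τ : ℂ | 0 < τ.im}) ∧
      (∃ τ : ℂ, 0 < τ.im ∧ f n τ ≠ 0) ∧
      (∀ τ : ℂ, 0 < τ.im →
        Uhat n τ = ∑ j ∈ Finset.range (n + 1), f j τ / (τ.im : ℂ) ^ j)) := by
  refine ⟨fun a b c d h τ hτ ↦ Uhat_modular n h hτ, ?_⟩
  refine ⟨fun j τ ↦ 2 * I * ((-1 : ℂ) ^ (n + j) * (π : ℂ) ^ (2 * n - j + 1) *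
    Uram (n - j) (qq τ) / (2 ^ j * (Nat.factorial j : ℂ) *
      (Nat.factorial (2 * n - 2 * j + 1) : ℂ))), fun j _ ↦ ?_, ⟨I, by simp, ?_⟩, fun τ hτ ↦ ?_⟩
  · simp only [Uram_eq]
    have h := (differentiableOn_qnum_qq (n - j)).div (differentiableOn_qnum_qq 0)
      fun τ hτ ↦ qnum_zero_ne_zero hτ
    exact ((h.const_mul _).div_const _).const_mul _
  · have h := qnum_zero_ne_zero (τ := I) (by simp)
    simp [Uram_eq, h, Real.pi_ne_zero, Nat.factorial_ne_zero]
  · rw [Uhat, Finset.mul_sum]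
    refine Finset.sum_congr rfl fun j _ ↦ ?_
    simp only [mul_pow, div_eq_mul_inv, mul_inv]
    ring
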